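/- arXiv:2206.05482 — 9 statements merged into one kernel-verified Lean document; each statement's English description precedes it below -/
import Mathlib

section
/- Let Â = A + εB be an n×n dual matrix. Then Â has dual index one if and only if there exists a real n×n matrix G that is a group inverse of A (so A has index one) and rank(A) equals the rank of the n×2n block matrix [A B(Iₙ − A·G)]. -/
open Matrix

/-- The dual matrix `A + εB`, viewed as a matrix over the dual numbers `ℝ[ε]`. -/
def dm {n : ℕ} (A B : Matrix (Fin n) (Fin n) ℝ) :
    Matrix (Fin n) (Fin n) (DualNumber ℝ) :=
  fun i j => TrivSqZeroExt.inl (A i j) + TrivSqZeroExt.inr (B i j)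

/-- A dual matrix has dual index one iff its column space equals that of its square,
equivalently (as shown in the paper) there is a dual matrix `X` with `M² * X = M`. -/
def DualIndexOne {n : ℕ} (M : Matrix (Fin n) (Fin n) (DualNumber ℝ)) : Prop :=
  ∃ X : Matrix (Fin n) (Fin n) (DualNumber ℝ), M * M * X = M

/-- `G` is a group inverse of the real matrix `A`. -/
def IsGroupInv {n : ℕ} (A G : Matrix (Fin n) (Fin n) ℝ) : Prop :=
  A * G * A = A ∧ G * A * G = G ∧ A * G = G * A

/-- `X` is the Moore–Penrose inverse of the real matrix `A`. -/
def IsMoorePenrose {n : ℕ} (A X : Matrix (Fin n) (Fin n) ℝ) : Prop :=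
  A * X * A = A ∧ X * A * X = X ∧ (A * X)ᵀ = A * X ∧ (X * A)ᵀ = X * A

/-- `C` is a core inverse of the real matrix `A`. -/
def IsCoreInv {n : ℕ} (A C : Matrix (Fin n) (Fin n) ℝ) : Prop :=
  A * C * A = A ∧ A * (C * C) = C ∧ (A * C)ᵀ = A * C

/-- `G` is a dual group generalized inverse (DGGI) of the dual matrix `M`. -/
def IsDGGI {n : ℕ} (M G : Matrix (Fin n) (Fin n) (DualNumber ℝ)) : Prop :=
  M * G * M = M ∧ G * M * G = G ∧ M * G = G * M

/-- `X` is a dual Moore–Penrose generalized inverse (DMPGI) of the dual matrix `M`. -/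
def IsDMPGI {n : ℕ} (M X : Matrix (Fin n) (Fin n) (DualNumber ℝ)) : Prop :=
  M * X * M = M ∧ X * M * X = X ∧ (M * X)ᵀ = M * X ∧ (X * M)ᵀ = X * M

/-- `G` is a dual core generalized inverse (DCGI) of the dual matrix `M`. -/
def IsDCGI {n : ℕ} (M G : Matrix (Fin n) (Fin n) (DualNumber ℝ)) : Prop :=
  M * G * M = M ∧ M * (G * G) = G ∧ (M * G)ᵀ = M * G

theorem dm_mul_aux {n : ℕ} (A B C D : Matrix (Fin n) (Fin n) ℝ) :
    dm A B * dm C D = dm (A * C) (A * D + B * C) := by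
  ext i j
  · simp [dm, Matrix.mul_apply, TrivSqZeroExt.fst_sum]
  · simp [dm, Matrix.mul_apply, TrivSqZeroExt.snd_sum, Finset.sum_add_distrib, mul_comm]

theorem dm_surj_aux {n : ℕ} (X : Matrix (Fin n) (Fin n) (DualNumber ℝ)) :
    ∃ C D, X = dm C D := by
  refine ⟨fun i j => (X i j).fst, fun i j => (X i j).snd, ?_⟩
  ext i j <;> simp [dm]

theorem dm_inj_aux {n : ℕ} {A B C D : Matrix (Fin n) (Fin n) ℝ} (h : dm A B = dm C D) :
    A = C ∧ B = D := by
  constructor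
  · ext i j
    have := congrArg TrivSqZeroExt.fst (congrFun (congrFun h i) j)
    simpa [dm] using this
  · ext i j
    have := congrArg TrivSqZeroExt.snd (congrFun (congrFun h i) j)
    simpa [dm] using this

/-- If every column of `P` lies in the range of `Q`, then `P` factors through `Q`. -/
theorem factor_aux {m k l : Type} [Fintype m] [Fintype k] [Fintype l] [DecidableEq k]
    (P : Matrix m k ℝ) (Q : Matrix m l ℝ)
    (h : LinearMap.range P.mulVecLin ≤ LinearMap.range Q.mulVecLin) :
    ∃ Z : Matrix l k ℝ, P = Q * Z := by
  have h1 : ∀ j, ∃ z, Q *ᵥ z = P.col j := by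
    intro j
    obtain ⟨z, hz⟩ := h ⟨Pi.single j 1, rfl⟩
    exact ⟨z, by simpa using hz⟩
  choose z hz using h1
  refine ⟨fun a j => z j a, ?_⟩
  ext i j
  exact (congrFun (hz j) i).symm

theorem range_mul_le_aux {m k l : Type} [Fintype m] [Fintype k] [Fintype l]
    (Q : Matrix m l ℝ) (Z : Matrix l k ℝ) :
    LinearMap.range (Q * Z).mulVecLin ≤ LinearMap.range Q.mulVecLin := by
  rw [Matrix.mulVecLin_mul]
  exact LinearMap.range_comp_le_range _ _

/-- If `Q * Z` has the rank of `Q`, then `Q` factors through `Q * Z`. -/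
theorem factor_rank_aux {m k l : Type} [Fintype m] [Fintype k] [Fintype l] [DecidableEq l]
    (Q : Matrix m l ℝ) (Z : Matrix l k ℝ) (h : Q.rank ≤ (Q * Z).rank) :
    ∃ W : Matrix k l ℝ, Q = Q * Z * W := by
  apply factor_aux
  exact (Submodule.eq_of_le_of_finrank_le (range_mul_le_aux Q Z) h).ge

theorem rank_fromCols_aux {n : ℕ} (A C : Matrix (Fin n) (Fin n) ℝ) :
    A.rank = (Matrix.fromCols A C).rank ↔ ∃ Z, C = A * Z := by
  have e : Matrix.fromCols A C * Matrix.fromRows (1 : Matrix (Fin n) (Fin n) ℝ)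
      (0 : Matrix (Fin n) (Fin n) ℝ) = A := by
    simp [Matrix.fromCols_mul_fromRows]
  constructor
  · intro h
    obtain ⟨W, hW⟩ := factor_rank_aux (Matrix.fromCols A C)
      (Matrix.fromRows (1 : Matrix (Fin n) (Fin n) ℝ) (0 : Matrix (Fin n) (Fin n) ℝ))
      (by rw [e]; exact h.ge)
    rw [e] at hW
    refine ⟨W.toCols₂, ?_⟩
    have := congrArg Matrix.toCols₂ hW
    rw [Matrix.toCols₂_fromCols] at this
    rw [this]
    rfl
  · rintro ⟨Z, rfl⟩
    apply le_antisymm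
    · conv_lhs => rw [← e]
      exact Matrix.rank_mul_le_left _ _
    · have : Matrix.fromCols A (A * Z) = A * Matrix.fromCols 1 Z := by
        simp [Matrix.mul_fromCols]
      rw [this]
      exact Matrix.rank_mul_le_left _ _

theorem stmt0 {n : ℕ} (A B : Matrix (Fin n) (Fin n) ℝ) :
    DualIndexOne (dm A B) ↔
      ∃ G : Matrix (Fin n) (Fin n) ℝ, IsGroupInv A G ∧
            A.rank = (Matrix.fromCols A (B * (1 - A * G))).rank := by
  constructor
  · rintro ⟨X, hX⟩
    obtain ⟨X, X1, rfl⟩ := dm_surj_aux X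
    rw [dm_mul_aux, dm_mul_aux] at hX
    obtain ⟨h0, h1⟩ := dm_inj_aux hX
    obtain ⟨Y, hY⟩ : ∃ Y, Y * (A * A) = A := by
      obtain ⟨W, hW⟩ := factor_rank_aux Aᵀ Aᵀ (by
        rw [← Matrix.transpose_mul, Matrix.rank_transpose, Matrix.rank_transpose]
        conv_lhs => rw [← h0]
        exact Matrix.rank_mul_le_left _ _)
      refine ⟨Wᵀ, ?_⟩
      have := congrArg Matrix.transpose hW
      simpa [Matrix.transpose_mul] using this.symm
    have hax : A * X = Y * A := by
      calc A * X = Y * (A * A) * X := by rw [hY]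
        _ = Y * (A * A * X) := by simp only [Matrix.mul_assoc]
        _ = Y * A := by rw [h0]
    have hAG : A * (A * X * X) = A * X := by
      rw [← Matrix.mul_assoc, ← Matrix.mul_assoc, h0]
    have hGA : A * X * X * A = A * X := by
      calc A * X * X * A = Y * (A * X) * A := by rw [hax, Matrix.mul_assoc Y A X, hax]
        _ = Y * (Y * (A * A)) := by rw [hax]; simp only [Matrix.mul_assoc]
        _ = A * X := by rw [hY, hax]
    have hAGA : A * X * A = A := by rw [hax, Matrix.mul_assoc, hY]
    refine ⟨A * X * X, ⟨?_, ?_, ?_⟩, ?_⟩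
    · rw [hAG, hAGA]
    · rw [hGA]
      calc A * X * (A * X * X) = A * X * A * X * X := by simp only [Matrix.mul_assoc]
        _ = _ := by rw [hAGA]
    · rw [hAG, hGA]
    · rw [rank_fromCols_aux, hAG]
      refine ⟨A * X1 + B * X, ?_⟩
      have : B * (1 - A * X) = B - B * A * X := by noncomm_ring
      rw [this, sub_eq_iff_eq_add]
      refine h1.symm.trans ?_
      noncomm_ring
  · rintro ⟨G, ⟨g1, g2, g3⟩, hr⟩
    rw [rank_fromCols_aux] at hr
    obtain ⟨Z, hZ⟩ := hr
    refine ⟨dm G (G * (Z - B * G)), ?_⟩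
    have k : A * A * G = A := by rw [Matrix.mul_assoc, g3, ← Matrix.mul_assoc, g1]
    rw [dm_mul_aux, dm_mul_aux, k, ← Matrix.mul_assoc, k, Matrix.mul_sub, ← hZ]
    congr 1
    noncomm_ring
end

section
/- Let Â = A + εB be an n×n dual matrix. Then Â has dual index one if and only if rank(A²) = rank(A) and the 2n×2n block matrix [[B, A],[A, 0]] has rank equal to 2·rank(A). -/
open Matrix

lemma aux_mul_of_rank {m : Type*} [Fintype m] [DecidableEq m] (M N : Matrix m m ℝ)
    (h : (M * N).rank = M.rank) : ∃ Y, M = M * N * Y := by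
  have hle : LinearMap.range (M * N).mulVecLin ≤ LinearMap.range M.mulVecLin := by
    rw [Matrix.mulVecLin_mul]
    exact LinearMap.range_comp_le_range _ _
  have heq := Submodule.eq_of_le_of_finrank_eq hle h
  have hc : ∀ j, ∃ y, (M * N) *ᵥ y = M.col j := by
    intro j
    have : M.col j ∈ LinearMap.range (M * N).mulVecLin := by
      rw [heq]
      exact ⟨Pi.single j 1, by simp⟩
    simpa using this
  choose y hy using hc
  refine ⟨Matrix.of fun i j => y j i, ?_⟩
  ext i j
  have := congrFun (hy j) i
  rw [Matrix.mul_apply]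
  simpa [Matrix.mulVec, dotProduct] using this.symm

lemma aux_rank_of_mul {m : Type*} [Fintype m] [DecidableEq m] (M N Y : Matrix m m ℝ)
    (h : M = M * N * Y) : (M * N).rank = M.rank := by
  apply le_antisymm (Matrix.rank_mul_le_left _ _)
  conv_lhs => rw [h]
  exact Matrix.rank_mul_le_left _ _

def Submodule.prodEquivOfProd {V W : Type*} [AddCommGroup V] [Module ℝ V] [AddCommGroup W]
    [Module ℝ W] (p : Submodule ℝ V) (q : Submodule ℝ W) : (p.prod q) ≃ₗ[ℝ] p × q where
  toFun x := (⟨x.1.1, x.2.1⟩, ⟨x.1.2, x.2.2⟩)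
  invFun x := ⟨(x.1.1, x.2.1), ⟨x.1.2, x.2.2⟩⟩
  map_add' _ _ := rfl
  map_smul' _ _ := rfl
  left_inv _ := rfl
  right_inv _ := rfl

lemma aux_rank_anti {n : ℕ} (A : Matrix (Fin n) (Fin n) ℝ) :
    (Matrix.fromBlocks 0 A A 0).rank = 2 * A.rank := by
  let e := LinearEquiv.sumArrowLequivProdArrow (Fin n) (Fin n) ℝ ℝ
  have hr : (LinearMap.range (Matrix.fromBlocks 0 A A 0).mulVecLin).map e.toLinearMap
      = (LinearMap.range A.mulVecLin).prod (LinearMap.range A.mulVecLin) := by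
    ext ⟨u, v⟩
    simp only [Submodule.mem_map, LinearMap.mem_range, Submodule.mem_prod]
    constructor
    · rintro ⟨_, ⟨x, rfl⟩, hx⟩
      have h1 := congrArg Prod.fst hx
      have h2 := congrArg Prod.snd hx
      refine ⟨⟨x ∘ Sum.inr, ?_⟩, ⟨x ∘ Sum.inl, ?_⟩⟩
      · refine Eq.trans ?_ h1; ext i; simp [e, Matrix.fromBlocks_mulVec]
      · refine Eq.trans ?_ h2; ext i; simp [e, Matrix.fromBlocks_mulVec]
    · rintro ⟨⟨x, hx⟩, ⟨y, hy⟩⟩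
      refine ⟨_, ⟨Sum.elim y x, rfl⟩, ?_⟩
      simp at hx hy hx
      ext i
      · simp [e, Matrix.fromBlocks_mulVec, hx]
      · simp [e, Matrix.fromBlocks_mulVec, hy]
  rw [Matrix.rank, ← LinearEquiv.finrank_map_eq e, hr,
    (Submodule.prodEquivOfProd _ _).finrank_eq, Module.finrank_prod, Matrix.rank, two_mul]

lemma aux_index {n : ℕ} (A : Matrix (Fin n) (Fin n) ℝ) (h : (A * A).rank = A.rank) :
    ∃ G, A * G = G * A ∧ A * G * A = A := by
  obtain ⟨X, hX⟩ := aux_mul_of_rank A A h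
  obtain ⟨Z, hZ⟩ := aux_mul_of_rank Aᵀ Aᵀ (by
    rw [← Matrix.transpose_mul, Matrix.rank_transpose, Matrix.rank_transpose, h])
  have hZ2 : A = Zᵀ * (A * A) := by
    have := congrArg Matrix.transpose hZ
    simpa [Matrix.transpose_mul, Matrix.mul_assoc] using this
  generalize Zᵀ = W at hZ2
  have hP : A * X = W * A := by
    calc A * X = W * (A * A) * X := by rw [← hZ2]
      _ = W * (A * A * X) := by simp only [Matrix.mul_assoc]
      _ = W * A := by rw [← hX]
  have h1 : A * (W * A * X) = A * X := by
    rw [← hP]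
    calc A * (A * X * X) = A * A * X * X := by simp only [Matrix.mul_assoc]
      _ = A * X := by rw [← hX]
  have h2 : W * A * X * A = A * X := by
    calc W * A * X * A = W * (A * X) * A := by simp only [Matrix.mul_assoc]
      _ = W * (W * (A * A)) := by rw [hP]; simp only [Matrix.mul_assoc]
      _ = A * X := by rw [← hZ2, hP]
  refine ⟨W * A * X, by rw [h1, h2], ?_⟩
  rw [h1, hP, Matrix.mul_assoc, ← hZ2]

lemma aux_rank_block {n : ℕ} (A B G : Matrix (Fin n) (Fin n) ℝ) (hc : A * G = G * A)
    (hA : A * G * A = A) :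
    (Matrix.fromBlocks B A A 0).rank = 2 * A.rank ↔ B - A * G * B = (B - A * G * B) * (A * G) := by
  have hA' : A * (A * G) = A := by rw [hc, ← Matrix.mul_assoc, hA]
  have hMN : Matrix.fromBlocks B A A 0 * Matrix.fromBlocks (A * G) 0 0 (A * G)
      = Matrix.fromBlocks (B * (A * G)) A A 0 := by
    simp [Matrix.fromBlocks_multiply, hA']
  have hrk : (Matrix.fromBlocks (B * (A * G)) A A 0).rank = 2 * A.rank := by
    have : Matrix.fromBlocks (B * (A * G)) A A 0
        = Matrix.fromBlocks 1 (B * G) 0 1 * Matrix.fromBlocks 0 A A 0 := by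
      simp [Matrix.fromBlocks_multiply, hc, Matrix.mul_assoc]
    rw [this, Matrix.rank_mul_eq_right_of_isUnit_det _ _ (by simp), aux_rank_anti]
  rw [← hrk, ← hMN, eq_comm]
  constructor
  · intro h
    obtain ⟨Y, hY⟩ := aux_mul_of_rank _ _ h
    rw [hMN, ← Matrix.fromBlocks_toBlocks Y, Matrix.fromBlocks_multiply,
      Matrix.fromBlocks_inj] at hY
    obtain ⟨h1, -, h2, -⟩ := hY
    generalize Y.toBlocks₁₁ = U at *
    generalize Y.toBlocks₂₁ = V at *
    simp only [Matrix.zero_mul, add_zero] at h2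
    have h3 : A * G * U = A * G := by
      rw [hc, Matrix.mul_assoc, ← h2]
    have h4 : B = B * (A * G) + A * V := by
      rw [← h3, ← Matrix.mul_assoc]; rw [← Matrix.mul_assoc] at h1; simpa [Matrix.mul_assoc] using h1
    have h5 : B - A * G * B = B * (A * G) - A * G * (B * (A * G)) := by
      have : A * G * B = A * G * (B * (A * G)) + A * V := by
        conv_lhs => rw [h4]
        rw [Matrix.mul_add, ← Matrix.mul_assoc (A * G) A V, hA]
      linear_combination (norm := abel) h4 - this
    rw [Matrix.sub_mul, Matrix.mul_assoc (A * G) B]; exact h5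
  · intro h
    apply aux_rank_of_mul _ _ (Matrix.fromBlocks 1 0 (G * (B - B * (A * G))) 1)
    rw [hMN]
    simp only [Matrix.fromBlocks_multiply, Matrix.mul_one, Matrix.mul_zero, Matrix.zero_mul,
      add_zero, zero_add]
    congr 1
    rw [Matrix.sub_mul] at h
    rw [← Matrix.mul_assoc A G, Matrix.mul_sub]
    rw [Matrix.mul_assoc (A * G) B] at h
    linear_combination (norm := abel) h

lemma aux_dual {n : ℕ} (A B : Matrix (Fin n) (Fin n) ℝ) :
    DualIndexOne (dm A B) ↔ ∃ X Y : Matrix (Fin n) (Fin n) ℝ,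
      A * A * X = A ∧ A * A * Y + (A * B + B * A) * X = B := by
  have key : ∀ X Y : Matrix (Fin n) (Fin n) ℝ, dm A B * dm A B * dm X Y = dm A B ↔ 
      (A * A * X = A ∧ A * A * Y + (A * B + B * A) * X = B) := by
    have hm : ∀ A B C D : Matrix (Fin n) (Fin n) ℝ, 
        dm A B * dm C D = dm (A * C) (A * D + B * C) := by
      intro A B C D
      ext i j
      · simp [dm, Matrix.mul_apply, TrivSqZeroExt.fst_sum]
      · simp [dm, Matrix.mul_apply, TrivSqZeroExt.snd_sum, Finset.sum_add_distrib, mul_comm]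
    intro X Y
    rw [hm, hm]
    constructor
    · intro h
      constructor
      · ext i j
        have := congrArg TrivSqZeroExt.fst (congrFun (congrFun h i) j)
        simpa [dm] using this
      · ext i j
        have := congrArg TrivSqZeroExt.snd (congrFun (congrFun h i) j)
        simpa [dm] using this
    · rintro ⟨h1, h2⟩
      rw [h1, h2]
  constructor
  · rintro ⟨X, hX⟩
    refine ⟨X.map TrivSqZeroExt.fst, X.map TrivSqZeroExt.snd, (key _ _).1 ?_⟩
    convert hX
    ext i j <;> simp [dm]
  · rintro ⟨X, Y, h⟩
    exact ⟨dm X Y, (key _ _).2 h⟩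

theorem stmt1 {n : ℕ} (A B : Matrix (Fin n) (Fin n) ℝ) :
    DualIndexOne (dm A B) ↔
      (A * A).rank = A.rank ∧
        (Matrix.fromBlocks B A A 0).rank = 2 * A.rank := by
  rw [aux_dual]
  constructor
  · rintro ⟨X, Y, h1, h2⟩
    have hr := aux_rank_of_mul A A X h1.symm
    obtain ⟨G, hc, hA⟩ := aux_index A hr
    refine ⟨hr, (aux_rank_block A B G hc hA).2 ?_⟩
    have hX : A * X = A * G := by
      calc A * X = A * G * A * X := by rw [hA]
        _ = G * (A * A * X) := by rw [hc]; simp only [Matrix.mul_assoc]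
        _ = A * G := by rw [h1, hc]
    have h3 : ∀ C, A * G * (A * C) = A * C := fun C => by rw [← Matrix.mul_assoc, hA]
    conv_lhs => rw [← h2]
    simp only [Matrix.add_mul, Matrix.mul_add, Matrix.sub_mul, Matrix.mul_assoc, hX] at h3 ⊢
    simp only [h3]
    abel
  · rintro ⟨hr, hb⟩
    obtain ⟨G, hc, hA⟩ := aux_index A hr
    rw [aux_rank_block A B G hc hA] at hb
    have hA' : A * A * G = A := by rw [Matrix.mul_assoc, hc, ← Matrix.mul_assoc, hA]
    refine ⟨G, G * G * (B - (A * B + B * A) * G), hA', ?_⟩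
    have e : A * A * (G * G * (B - (A * B + B * A) * G)) 
        = A * G * (B - (A * B + B * A) * G) := by
      calc _ = (A * A * G) * G * (B - (A * B + B * A) * G) := by simp only [Matrix.mul_assoc]
        _ = _ := by rw [hA']
    have h3 : ∀ C, A * G * (A * C) = A * C := fun C => by rw [← Matrix.mul_assoc, hA]
    rw [e]
    simp only [Matrix.add_mul, Matrix.mul_add, Matrix.sub_mul, Matrix.mul_sub, Matrix.mul_assoc] at h3 hb ⊢
    simp only [h3]
    linear_combination (norm := abel) -hb
end

section
/- Let Â = A + εB be an n×n dual matrix. Then Â has dual index one if and only if Â has a dual group generalized inverse, i.e. there exists a dual matrix Ĝ with ÂĜÂ = Â, ĜÂĜ = Ĝ and ÂĜ = ĜÂ. -/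
open Matrix

theorem aux_cancel {n : ℕ} {R : Type*} [CommRing R] (M X C : Matrix (Fin n) (Fin n) R)
    (h : M * M * X = M) (hC : M * M * C = 0) : M * C = 0 := by
  let f := M.mulVecLin
  let g : LinearMap.range f →ₗ[R] LinearMap.range f :=
    f.restrict (fun x _ => LinearMap.mem_range_self f x)
  have hs : Function.Surjective g := by
    rintro ⟨y, v, rfl⟩
    refine ⟨⟨f (X *ᵥ v), LinearMap.mem_range_self f _⟩, ?_⟩
    apply Subtype.ext
    change M *ᵥ (M *ᵥ (X *ᵥ v)) = M *ᵥ v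
    rw [Matrix.mulVec_mulVec, Matrix.mulVec_mulVec, h]
  have hi : Function.Injective g := OrzechProperty.injective_of_surjective_endomorphism g hs
  apply Matrix.ext_of_mulVec_single
  intro j
  rw [Matrix.zero_mulVec, ← Matrix.mulVec_mulVec]
  have h0 : g ⟨f (C *ᵥ Pi.single j 1), LinearMap.mem_range_self f _⟩ = g 0 := by
    apply Subtype.ext
    rw [map_zero]
    change M *ᵥ (M *ᵥ (C *ᵥ Pi.single j 1)) = 0
    rw [Matrix.mulVec_mulVec, Matrix.mulVec_mulVec, hC, Matrix.zero_mulVec]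
  exact congrArg Subtype.val (hi h0)

theorem stmt4 {n : ℕ} (A B : Matrix (Fin n) (Fin n) ℝ) :
    DualIndexOne (dm A B) ↔
      ∃ G : Matrix (Fin n) (Fin n) (DualNumber ℝ), IsDGGI (dm A B) G := by
  generalize dm A B = M
  constructor
  · rintro ⟨X, h⟩
    have h1 : M * X * M = M := by
      have := aux_cancel M X (X * M - 1) h (by
        rw [mul_sub, mul_one, ← mul_assoc, h, sub_self])
      rw [mul_sub, mul_one, ← mul_assoc] at this
      exact sub_eq_zero.mp this
    have h2 : M * X = M * X * X * M := by
      have := aux_cancel M X (X - X * X * M) h (by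
        rw [mul_sub, ← mul_assoc, ← mul_assoc, h, h1, sub_self])
      rw [mul_sub, ← mul_assoc, ← mul_assoc] at this
      exact sub_eq_zero.mp this
    have h3 : M * (M * X * X) = M * X := by
      rw [← mul_assoc, ← mul_assoc, h]
    refine ⟨M * X * X, ?_, ?_, ?_⟩
    · rw [h3, h1]
    · rw [← h2, ← mul_assoc, ← mul_assoc, h1]
    · rw [h3, ← h2]
  · rintro ⟨G, h1, -, h3⟩
    exact ⟨G, by rw [mul_assoc, h3, ← mul_assoc, h1]⟩
end

section
/- Let Â = A + εB be an n×n dual matrix. Then Â has dual index one if and only if rank(A²) = rank(A) and Â has a dual Moore–Penrose generalized inverse, i.e. there exists a dual matrix X̂ with ÂX̂Â = Â, X̂ÂX̂ = X̂, (ÂX̂)^T = ÂX̂ and (X̂Â)^T = X̂Â. -/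
open Matrix

lemma aux_proj {n : ℕ} {R : Type*} [CommRing R]
    (hR : ∀ x : Matrix (Fin n) (Fin n) R, IsUnit (1 + xᵀ * x))
    (e : Matrix (Fin n) (Fin n) R) (he : e * e = e) :
    ∃ p : Matrix (Fin n) (Fin n) R, pᵀ = p ∧ p * e = e ∧ e * p = p := by
  obtain ⟨u, hu⟩ := hR (e - eᵀ)
  have het : eᵀ * eᵀ = eᵀ := by rw [← transpose_mul, he]
  have hu1 : (u : Matrix (Fin n) (Fin n) R) = 1 - e - eᵀ + e * eᵀ + eᵀ * e := by
    rw [hu, transpose_sub, transpose_transpose]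
    simp only [mul_sub, sub_mul, he, het]
    abel
  have hut : (u : Matrix (Fin n) (Fin n) R)ᵀ = u := by
    rw [hu1]
    simp only [transpose_add, transpose_sub, transpose_mul, transpose_transpose, transpose_one]
    abel
  have a1 : e * (u : Matrix (Fin n) (Fin n) R) = e * eᵀ * e := by
    rw [hu1]
    simp only [mul_add, mul_sub, mul_one, ← mul_assoc, he]
    abel
  have a2 : (u : Matrix (Fin n) (Fin n) R) * e = e * eᵀ * e := by
    rw [hu1]
    simp only [add_mul, sub_mul, one_mul, mul_assoc, he]
    abel
  set v : Matrix (Fin n) (Fin n) R := u.inv with hv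
  have uv : (u : Matrix (Fin n) (Fin n) R) * v = 1 := u.val_inv
  have vu : v * (u : Matrix (Fin n) (Fin n) R) = 1 := u.inv_val
  have hvt : vᵀ = v := by
    have h1 : vᵀ * (u : Matrix (Fin n) (Fin n) R) = 1 := by
      have := congrArg transpose uv
      rwa [transpose_mul, hut, transpose_one] at this
    calc vᵀ = vᵀ * ((u : Matrix (Fin n) (Fin n) R) * v) := by rw [uv, mul_one]
      _ = v := by rw [← mul_assoc, h1, one_mul]
  have hc : v * e = e * v := by
    calc v * e = v * (e * ((u : Matrix (Fin n) (Fin n) R) * v)) := by rw [uv, mul_one]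
      _ = v * (e * (u : Matrix (Fin n) (Fin n) R)) * v := by simp only [mul_assoc]
      _ = v * ((u : Matrix (Fin n) (Fin n) R) * e) * v := by rw [a1, a2]
      _ = e * v := by rw [← mul_assoc v, vu, one_mul]
  have hct : eᵀ * v = v * eᵀ := by
    have := congrArg transpose hc
    rwa [transpose_mul, transpose_mul, hvt] at this
  refine ⟨e * eᵀ * v, ?_, ?_, ?_⟩
  · rw [transpose_mul, transpose_mul, hvt, transpose_transpose, ← mul_assoc, hc, mul_assoc e v,
      ← hct, mul_assoc]
  · rw [mul_assoc, hc, ← mul_assoc, ← a1, mul_assoc, uv, mul_one]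
  · rw [← mul_assoc, ← mul_assoc, he]

lemma aux_mp {n : ℕ} {R : Type*} [CommRing R]
    (hR : ∀ x : Matrix (Fin n) (Fin n) R, IsUnit (1 + xᵀ * x))
    (M Y : Matrix (Fin n) (Fin n) R) (h : M * Y * M = M) :
    ∃ X : Matrix (Fin n) (Fin n) R,
      M * X * M = M ∧ X * M * X = X ∧ (M * X)ᵀ = M * X ∧ (X * M)ᵀ = X * M := by
  obtain ⟨p, p1, p2, p3⟩ := aux_proj hR (M * Y) (by rw [← mul_assoc, h])
  obtain ⟨q, q1, q2, q3⟩ := aux_proj hR (Y * M)ᵀ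
    (by rw [← transpose_mul, mul_assoc Y, ← mul_assoc M, h])
  have q2' : Y * M * q = Y * M := by
    have := congrArg transpose q2
    rwa [transpose_mul, transpose_transpose, q1] at this
  have q3' : q * (Y * M) = q := by
    have := congrArg transpose q3
    rwa [transpose_mul, transpose_transpose, q1] at this
  have hq : M * q = M := by
    calc M * q = M * Y * M * q := by rw [h]
      _ = M * (Y * M * q) := by simp only [mul_assoc]
      _ = M := by rw [q2', ← mul_assoc, h]
  have hp : p * M = M := by
    calc p * M = p * (M * Y * M) := by rw [h]
      _ = p * (M * Y) * M := by simp only [mul_assoc]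
      _ = M := by rw [p2, h]
  have e1 : M * (q * Y * p) = p := by
    rw [mul_assoc q, ← mul_assoc, hq, ← mul_assoc, p3]
  have e2 : q * Y * p * M = q := by
    rw [mul_assoc, hp, mul_assoc, q3']
  have hqq : q * q = q := by
    calc q * q = q * (Y * M) * q := by rw [q3']
      _ = q := by rw [mul_assoc, q2', q3']
  refine ⟨q * Y * p, ?_, ?_, ?_, ?_⟩
  · rw [e1, hp]
  · rw [e2, ← mul_assoc, ← mul_assoc, hqq]
  · rw [e1, p1]
  · rw [e2, q1]

lemma aux_reg {n : ℕ} {R : Type*} [CommRing R]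
    (M X : Matrix (Fin n) (Fin n) R) (h : M * M * X = M) : M * X * M = M := by
  have hmem : ∀ x ∈ LinearMap.range M.mulVecLin, M.mulVecLin x ∈ LinearMap.range M.mulVecLin :=
    fun x _ => ⟨x, rfl⟩
  let f := M.mulVecLin.restrict hmem
  have hf : Function.Surjective f := by
    rintro ⟨_, v, rfl⟩
    refine ⟨⟨M *ᵥ (X *ᵥ v), X *ᵥ v, rfl⟩, Subtype.ext ?_⟩
    change M *ᵥ (M *ᵥ (X *ᵥ v)) = M *ᵥ v
    rw [mulVec_mulVec, mulVec_mulVec, h]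
  have hi := OrzechProperty.injective_of_surjective_endomorphism f hf
  have key : ∀ v, (M * X * M) *ᵥ v = M *ᵥ v := by
    intro v
    have := @hi ⟨M *ᵥ ((X * M) *ᵥ v), _, rfl⟩ ⟨M *ᵥ v, v, rfl⟩ (Subtype.ext (by
      change M *ᵥ (M *ᵥ ((X * M) *ᵥ v)) = M *ᵥ (M *ᵥ v)
      rw [mulVec_mulVec, mulVec_mulVec, mulVec_mulVec, ← mul_assoc, h]))
    have := congrArg Subtype.val this
    simpa [mulVec_mulVec, mul_assoc] using this
  exact Matrix.ext_of_mulVec_single fun i => key _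

lemma aux_unit {n : ℕ} (x : Matrix (Fin n) (Fin n) (DualNumber ℝ)) : IsUnit (1 + xᵀ * x) := by
  rw [Matrix.isUnit_iff_isUnit_det, TrivSqZeroExt.isUnit_iff_isUnit_fst]
  let φ : DualNumber ℝ →+* ℝ := (TrivSqZeroExt.fstHom ℝ ℝ ℝ).toRingHom
  have h1 : (1 + xᵀ * x).det.fst = (1 + (x.map φ)ᵀ * (x.map φ)).det := by
    change φ (1 + xᵀ * x).det = _
    rw [RingHom.map_det]
    congr 1
    change φ.mapMatrix _ = _
    rw [map_add, map_one, map_mul]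
    rfl
  rw [h1, ← Matrix.isUnit_iff_isUnit_det]
  have h2 := Matrix.posSemidef_conjTranspose_mul_self (x.map φ)
  rw [conjTranspose_eq_transpose_of_trivial] at h2
  exact (Matrix.PosDef.one.add_posSemidef h2).isUnit

lemma aux_rank {n : ℕ} (A : Matrix (Fin n) (Fin n) ℝ) (h : (A * A).rank = A.rank) :
    ∃ P, A * A * P = A := by
  have hle : LinearMap.range (A * A).mulVecLin ≤ LinearMap.range A.mulVecLin := by
    rintro _ ⟨v, rfl⟩
    exact ⟨A *ᵥ v, by simp⟩
  have heq := Submodule.eq_of_le_of_finrank_eq hle h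
  have : ∀ j, ∃ v, (A * A) *ᵥ v = A.col j := by
    intro j
    have : A.col j ∈ LinearMap.range (A * A).mulVecLin := by
      rw [heq]
      exact ⟨Pi.single j 1, by simp⟩
    exact this
  choose v hv using this
  refine ⟨(Matrix.of v)ᵀ, ?_⟩
  ext i j
  exact congrFun (hv j) i

theorem stmt5 {n : ℕ} (A B : Matrix (Fin n) (Fin n) ℝ) :
    DualIndexOne (dm A B) ↔
      (A * A).rank = A.rank ∧
        ∃ X : Matrix (Fin n) (Fin n) (DualNumber ℝ), IsDMPGI (dm A B) X := by
  let φ : DualNumber ℝ →+* ℝ := (TrivSqZeroExt.fstHom ℝ ℝ ℝ).toRingHom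
  have hφ : ∀ x, φ x = x.fst := fun _ => rfl
  have hA : (dm A B).map φ = A := by
    ext i j
    simp [dm, hφ]
  constructor
  · rintro ⟨X, hX⟩
    refine ⟨le_antisymm (rank_mul_le_left _ _) ?_, aux_mp aux_unit _ X (aux_reg _ _ hX)⟩
    have h1 : A * A * X.map φ = A := by
      have := congrArg (fun N => N.map φ) hX
      simpa only [Matrix.map_mul, hA] using this
    calc A.rank = (A * A * X.map φ).rank := by rw [h1]
      _ ≤ _ := rank_mul_le_left _ _
  · rintro ⟨hr, X, hX, -⟩
    obtain ⟨P, hP⟩ := aux_rank A hr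
    set M := dm A B with hM
    let Q : Matrix (Fin n) (Fin n) (DualNumber ℝ) := P.map TrivSqZeroExt.inl
    have hQ : Q.map φ = P := by
      ext i j
      simp [Q, hφ]
    obtain ⟨D, hD⟩ : ∃ D, D = M - M * M * Q := ⟨_, rfl⟩
    have hD0 : D.map φ = 0 := by
      have : D.map φ = M.map φ - M.map φ * M.map φ * Q.map φ := by
        rw [hD, ← Matrix.map_mul, ← Matrix.map_mul, Matrix.map_sub φ (map_sub φ)]
      rw [this, hA, hQ, hP, sub_self]
    have hD1 : ∀ i j, (D i j).fst = 0 := fun i j => congrFun (congrFun hD0 i) j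
    have hDD : D * X * D = 0 := by
      have hDX : (D * X).map φ = 0 := by rw [Matrix.map_mul, hD0, zero_mul]
      refine Matrix.ext fun i j => ?_
      rw [Matrix.mul_apply]
      change _ = (0 : DualNumber ℝ)
      refine Finset.sum_eq_zero fun k _ => ?_
      have h1 : ((D * X) i k).fst = 0 := congrFun (congrFun hDX i) k
      ext <;> simp [h1, hD1]
    have hMD : M * X * D = D := by
      rw [hD, mul_sub, hX, ← mul_assoc, ← mul_assoc, hX]
    have hMe : M = D + M * M * Q := by rw [hD]; abel
    refine ⟨Q + Q * X * D, ?_⟩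
    have : M * M * Q * X * D = D := by
      have h1 : (D + M * M * Q) * X * D = D := by rw [← hMe, hMD]
      rwa [add_mul, add_mul, hDD, zero_add] at h1
    rw [mul_add, ← mul_assoc, ← mul_assoc, this, hD]
    abel
end

section
/- The dual core generalized inverse of a dual matrix is unique when it exists: if Â is an n×n dual matrix and Ĝ₁, Ĝ₂ are dual matrices each satisfying ÂĜᵢÂ = Â, ÂĜᵢ² = Ĝᵢ and (ÂĜᵢ)^T = ÂĜᵢ (i = 1,2), then Ĝ₁ = Ĝ₂. -/
open Matrix

theorem stmt8 {n : ℕ} (M G₁ G₂ : Matrix (Fin n) (Fin n) (DualNumber ℝ))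
    (h₁ : IsDCGI M G₁) (h₂ : IsDCGI M G₂) : G₁ = G₂ := by
  obtain ⟨a1, b1, c1⟩ := h₁
  obtain ⟨a2, b2, c2⟩ := h₂
  have e1 : M * G₁ * (M * G₂) = M * G₂ := by rw [← mul_assoc, a1]
  have e2 : M * G₂ * (M * G₁) = M * G₁ := by rw [← mul_assoc, a2]
  have e3 : M * G₁ = M * G₂ := by
    have h := congrArg Matrix.transpose e2
    rw [Matrix.transpose_mul, c1, c2, e1] at h
    exact h.symm
  have p1 : M * G₁ * G₁ = G₁ := by rw [mul_assoc, b1]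
  have p2 : M * G₁ * G₂ = G₂ := by rw [e3, mul_assoc, b2]
  generalize hP : M * G₁ = P at *
  have hPP : P * P = P := by rw [← e3] at e1; exact e1
  have hab : (M * P + (1 - P)) * (G₁ * P + (1 - P)) = 1 := by
    have t1 : M * P * (G₁ * P) = P := by
      rw [mul_assoc, ← mul_assoc P, p1, ← mul_assoc, hP, hPP]
    have t2 : M * P * (1 - P) = 0 := by
      rw [mul_assoc, mul_sub, hPP, mul_one, sub_self, mul_zero]
    have t3 : (1 - P) * (G₁ * P) = 0 := by
      rw [← mul_assoc, sub_mul, p1, one_mul, sub_self, zero_mul]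
    have t4 : (1 - P) * (1 - P) = 1 - P := by
      rw [mul_sub, sub_mul, sub_mul, hPP]; simp
    rw [add_mul, mul_add, mul_add, t1, t2, t3, t4]; abel
  have hba := mul_eq_one_comm.mp hab
  have hD : (M * P + (1 - P)) * (G₁ - G₂) = 0 := by
    rw [add_mul, mul_assoc, sub_mul, mul_sub P, p1, p2, one_mul, sub_self, add_zero,
      mul_sub, hP, e3, sub_self]
  have h := congrArg (fun X => (G₁ * P + (1 - P)) * X) hD
  simp only [← mul_assoc, hba, one_mul, mul_zero] at h
  exact sub_eq_zero.mp h
end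

section
/- Let Â = A + εB be an n×n dual matrix and let P be the Moore–Penrose inverse of A. The following are equivalent: (1) Â has a dual core generalized inverse; (2) there exists a group inverse G of A and a real n×n matrix X with B·G·A + A·X·A + A·G·B = B; (3) rank(A²) = rank(A) and there exists a real n×n matrix X with B·P·A + A·X·A + A·P·B = B; (4) there exists a core inverse C of A and a real n×n matrix X with B·C·A + A·X·A + A·C·B = B. -/
open Matrix

namespace S12

variable {n : ℕ}

lemma dm_mul (A B C D : Matrix (Fin n) (Fin n) ℝ) :
    dm A B * dm C D = dm (A * C) (A * D + B * C) := by
  ext i j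
  · simp [dm, Matrix.mul_apply, TrivSqZeroExt.fst_sum]
  · simp [dm, Matrix.mul_apply, TrivSqZeroExt.snd_sum, Finset.sum_add_distrib, mul_comm]

lemma dm_tr (A B : Matrix (Fin n) (Fin n) ℝ) : (dm A B)ᵀ = dm Aᵀ Bᵀ := rfl

lemma dm_inj {A B C D : Matrix (Fin n) (Fin n) ℝ} :
    dm A B = dm C D ↔ A = C ∧ B = D := by
  constructor
  · intro h
    constructor
    · ext i j
      have := congrArg TrivSqZeroExt.fst (congrFun (congrFun h i) j)
      simpa [dm] using this
    · ext i j
      have := congrArg TrivSqZeroExt.snd (congrFun (congrFun h i) j)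
      simpa [dm] using this
  · rintro ⟨rfl, rfl⟩; rfl

lemma dm_surj (M : Matrix (Fin n) (Fin n) (DualNumber ℝ)) : ∃ A B, M = dm A B := by
  refine ⟨fun i j => (M i j).fst, fun i j => (M i j).snd, ?_⟩
  ext i j <;> simp [dm]

/-- compatibility condition -/
def K (A B Y : Matrix (Fin n) (Fin n) ℝ) : Prop := B * Y * A + A * (-(Y * B * Y)) * A + A * Y * B = B

lemma K_of {A B Y X : Matrix (Fin n) (Fin n) ℝ} (h : A * Y * A = A)
    (hX : B * Y * A + A * X * A + A * Y * B = B) : K A B Y := by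
  have e : (1 - A * Y) * B * (1 - Y * A) = 0 := by
    have h1 : (1 - A * Y) * A = 0 := by rw [sub_mul, h]; simp
    have h2 : A * (1 - Y * A) = 0 := by rw [mul_sub, ← mul_assoc, h]; simp
    calc (1 - A * Y) * B * (1 - Y * A)
        = (1 - A * Y) * (B * Y * A + A * X * A + A * Y * B) * (1 - Y * A) := by rw [hX]
      _ = (1 - A * Y) * (B * Y) * (A * (1 - Y * A)) + ((1 - A * Y) * A) * X * A * (1 - Y * A)
          + ((1 - A * Y) * A) * Y * B * (1 - Y * A) := by noncomm_ring
      _ = 0 := by rw [h1, h2]; simp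
  unfold K
  rw [← sub_eq_zero]
  calc _ = -((1 - A * Y) * B * (1 - Y * A)) := by noncomm_ring
    _ = 0 := by rw [e]; simp

lemma K_indep {A B Y Z : Matrix (Fin n) (Fin n) ℝ} (hY : A * Y * A = A) (hZ : A * Z * A = A)
    (h : K A B Y) : K A B Z := by
  have e : (1 - A * Y) * B * (1 - Y * A) = 0 := by
    unfold K at h
    rw [← sub_eq_zero] at h
    calc _ = -(B * Y * A + A * (-(Y * B * Y)) * A + A * Y * B - B) := by noncomm_ring
      _ = 0 := by rw [h]; simp
  have h1 : (1 - A * Z) * (1 - A * Y) = 1 - A * Z := by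
    calc _ = 1 - A * Z - A * Y + (A * Z * A) * Y := by noncomm_ring
      _ = _ := by rw [hZ]; abel
  have h2 : (1 - Y * A) * (1 - Z * A) = 1 - Z * A := by
    calc _ = 1 - Z * A - Y * A + Y * (A * Z * A) := by noncomm_ring
      _ = _ := by rw [hZ]; abel
  have e2 : (1 - A * Z) * B * (1 - Z * A) = 0 := by
    calc _ = ((1 - A * Z) * (1 - A * Y)) * B * ((1 - Y * A) * (1 - Z * A)) := by rw [h1, h2]
      _ = (1 - A * Z) * ((1 - A * Y) * B * (1 - Y * A)) * (1 - Z * A) := by noncomm_ring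
      _ = 0 := by rw [e]; simp
  unfold K
  rw [← sub_eq_zero]
  calc _ = -((1 - A * Z) * B * (1 - Z * A)) := by noncomm_ring
    _ = 0 := by rw [e2]; simp

lemma exists_right {A : Matrix (Fin n) (Fin n) ℝ} (h : (A * A).rank = A.rank) :
    ∃ Y, A * A * Y = A := by
  have hle : LinearMap.range (A * A).mulVecLin ≤ LinearMap.range A.mulVecLin := by
    rw [Matrix.mulVecLin_mul]; exact LinearMap.range_comp_le_range _ _
  have heq := Submodule.eq_of_le_of_finrank_eq hle h
  have : ∀ j, ∃ y, (A * A) *ᵥ y = A.col j := by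
    intro j
    have : A.col j ∈ LinearMap.range (A * A).mulVecLin := by
      rw [heq]; exact ⟨Pi.single j 1, by simp⟩
    exact this
  choose y hy using this
  refine ⟨fun i j => y j i, ?_⟩
  ext i j
  exact congrFun (hy j) i

lemma exists_group {A : Matrix (Fin n) (Fin n) ℝ} (h : (A * A).rank = A.rank) :
    ∃ G, IsGroupInv A G := by
  obtain ⟨Y, hY⟩ := exists_right h
  have h' : (Aᵀ * Aᵀ).rank = Aᵀ.rank := by
    rw [← Matrix.transpose_mul, Matrix.rank_transpose, Matrix.rank_transpose, h]
  obtain ⟨W, hW⟩ := exists_right h'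
  have hZ : Wᵀ * (A * A) = A := by
    have := congrArg transpose hW
    simpa [Matrix.transpose_mul] using this
  generalize Wᵀ = Z at hZ
  have e : Z * A = A * Y := by
    calc Z * A = Z * (A * A * Y) := by rw [hY]
      _ = (Z * (A * A)) * Y := by simp only [mul_assoc]
      _ = A * Y := by rw [hZ]
  have e1 : A * Y * A = A := by rw [← e, mul_assoc, hZ]
  have a1 : A * (A * Y * Y) = A * Y := by
    rw [← mul_assoc, ← mul_assoc, hY]
  have a2 : A * Y * Y * A = A * Y := by
    rw [← e, mul_assoc Z, mul_assoc Z, e1]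
  refine ⟨A * Y * Y, ?_, ?_, ?_⟩
  · rw [a1, e1]
  · rw [a2, ← mul_assoc, ← mul_assoc, e1]
  · rw [a1, a2]

lemma core_of_group {A P G : Matrix (Fin n) (Fin n) ℝ} (hP : IsMoorePenrose A P)
    (hG : IsGroupInv A G) : IsCoreInv A (G * A * P) := by
  obtain ⟨p1, p2, p3, p4⟩ := hP
  obtain ⟨g1, g2, g3⟩ := hG
  have e : A * (G * A * P) = A * P := by rw [← mul_assoc, ← mul_assoc, g1]
  refine ⟨by rw [e, p1], ?_, by rw [e, p3]⟩
  rw [← mul_assoc, e, ← g3]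
  simp only [← mul_assoc]
  rw [p1]

lemma rank_of_core {A C : Matrix (Fin n) (Fin n) ℝ} (hC : IsCoreInv A C) :
    (A * A).rank = A.rank := by
  obtain ⟨c1, c2, c3⟩ := hC
  have e : A = (A * A) * (C * C * A) := by
    calc A = A * (A * (C * C)) * A := by rw [c2, c1]
      _ = _ := by simp only [mul_assoc]
  apply le_antisymm (Matrix.rank_mul_le_left _ _)
  conv_lhs => rw [e]
  exact Matrix.rank_mul_le_left _ _

lemma rank_of_group {A G : Matrix (Fin n) (Fin n) ℝ} (hG : IsGroupInv A G) :
    (A * A).rank = A.rank := by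
  obtain ⟨g1, g2, g3⟩ := hG
  have e : A = (A * A) * G := by
    rw [mul_assoc, g3, ← mul_assoc, g1]
  apply le_antisymm (Matrix.rank_mul_le_left _ _)
  conv_lhs => rw [e]
  exact Matrix.rank_mul_le_left _ _

lemma core_extra {A P G : Matrix (Fin n) (Fin n) ℝ} (hP : IsMoorePenrose A P)
    (hG : IsGroupInv A G) : (G * A * P) * A * A = A ∧ (G * A * P) * A * (G * A * P) = G * A * P := by
  obtain ⟨p1, p2, p3, p4⟩ := hP
  obtain ⟨g1, g2, g3⟩ := hG
  have e : G * A * P * A = G * A := by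
    rw [mul_assoc, mul_assoc, ← mul_assoc A, p1]
  rw [e]
  constructor
  · rw [← g3, g1]
  · rw [← mul_assoc, ← mul_assoc, g2]

lemma dcgi_of {A B C : Matrix (Fin n) (Fin n) ℝ} (hC : IsCoreInv A C)
    (h1 : C * A * A = A) (h2 : C * A * C = C) (hK : K A B C) : ∃ G, IsDCGI (dm A B) G := by
  obtain ⟨c1, c2, c3⟩ := hC
  obtain ⟨G1, hG1⟩ : ∃ G1, G1 = (1 - A * C) * B * C * C + C * (-(B * C) + Cᵀ * Bᵀ * (1 - A * C))
    - C * A * (1 - A * C) * B * C * C := ⟨_, rfl⟩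
  have q0 : (1 - A * C) * A = 0 := by rw [sub_mul, c1]; simp
  have qC : A * C * C = C := by rw [mul_assoc, c2]
  have q1 : (1 - A * C) * C = 0 := by rw [sub_mul, qC]; simp
  have q2 : A * C * Cᵀ = Cᵀ := by
    have := congrArg transpose h2
    rw [mul_assoc, Matrix.transpose_mul, c3] at this
    exact this
  have hAG : A * G1 = -(A * C * B * C) + Cᵀ * Bᵀ * (1 - A * C) := by
    rw [hG1]
    calc _ = (A - A * C * A) * (1 - A * C) * B * C * C - A * C * B * C
          + (A * C * Cᵀ) * Bᵀ * (1 - A * C) := by noncomm_ring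
      _ = _ := by rw [c1, q2]; noncomm_ring
  have hQG : A * C * G1 = G1 - (1 - A * C) * B * C * C := by
    rw [hG1]
    calc _ = (A * C - A * C * A * C) * B * C * C
          + (A * C * C) * (-(B * C) + Cᵀ * Bᵀ * (1 - A * C))
          - (A * C * C) * A * (1 - A * C) * B * C * C := by noncomm_ring
      _ = _ := by rw [c1, qC]; noncomm_ring
  refine ⟨dm C G1, ?_, ?_, ?_⟩
  · rw [dm_mul, dm_mul, dm_inj]
    refine ⟨c1, ?_⟩
    rw [hAG]
    unfold K at hK
    calc _ = (B * C * A + A * (-(C * B * C)) * A + A * C * B)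
          + Cᵀ * Bᵀ * ((1 - A * C) * A) := by noncomm_ring
      _ = B := by rw [hK, q0]; simp
  · rw [dm_mul, dm_mul, dm_inj]
    refine ⟨c2, ?_⟩
    calc A * (C * G1 + G1 * C) + B * (C * C) = A * C * G1 + A * G1 * C + B * (C * C) := by
          noncomm_ring
      _ = G1 + Cᵀ * Bᵀ * ((1 - A * C) * C) := by rw [hQG, hAG]; noncomm_ring
      _ = G1 := by rw [q1]; simp
  · rw [dm_mul, dm_tr, dm_inj]
    refine ⟨c3, ?_⟩
    rw [hAG]
    have : -(A * C * B * C) + Cᵀ * Bᵀ * (1 - A * C) + B * C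
      = (1 - A * C) * (B * C) + ((1 - A * C) * (B * C))ᵀ := by
      rw [Matrix.transpose_mul, Matrix.transpose_mul, Matrix.transpose_sub, c3,
        Matrix.transpose_one]
      noncomm_ring
    rw [this, Matrix.transpose_add, Matrix.transpose_transpose, add_comm]

lemma of_dcgi {A B : Matrix (Fin n) (Fin n) ℝ} (h : ∃ G, IsDCGI (dm A B) G) :
    ∃ C X, IsCoreInv A C ∧ B * C * A + A * X * A + A * C * B = B := by
  obtain ⟨G, h1, h2, h3⟩ := h
  obtain ⟨C, X, rfl⟩ := dm_surj G
  rw [dm_mul, dm_mul, dm_inj] at h1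
  rw [dm_mul, dm_mul, dm_inj] at h2
  rw [dm_mul, dm_tr, dm_inj] at h3
  refine ⟨C, X, ⟨h1.1, h2.1, h3.1⟩, ?_⟩
  have := h1.2
  rw [← sub_eq_zero] at this ⊢
  rw [← this]
  noncomm_ring

lemma dcgi_iff {A B P Y : Matrix (Fin n) (Fin n) ℝ} (hP : IsMoorePenrose A P)
    (hr : (A * A).rank = A.rank) (hY : A * Y * A = A) (hK : K A B Y) :
    ∃ G, IsDCGI (dm A B) G := by
  obtain ⟨G, hG⟩ := exists_group hr
  have hC := core_of_group hP hG
  obtain ⟨e1, e2⟩ := core_extra hP hG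
  exact dcgi_of hC e1 e2 (K_indep hY hC.1 hK)

end S12

theorem stmt12 {n : ℕ} (A B P : Matrix (Fin n) (Fin n) ℝ)
    (hP : IsMoorePenrose A P) :
    ((∃ G : Matrix (Fin n) (Fin n) (DualNumber ℝ), IsDCGI (dm A B) G) ↔
        ∃ G X : Matrix (Fin n) (Fin n) ℝ, IsGroupInv A G ∧
          B * G * A + A * X * A + A * G * B = B) ∧
    ((∃ G : Matrix (Fin n) (Fin n) (DualNumber ℝ), IsDCGI (dm A B) G) ↔
        (A * A).rank = A.rank ∧
          ∃ X : Matrix (Fin n) (Fin n) ℝ,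
            B * P * A + A * X * A + A * P * B = B) ∧
    ((∃ G : Matrix (Fin n) (Fin n) (DualNumber ℝ), IsDCGI (dm A B) G) ↔
        ∃ C X : Matrix (Fin n) (Fin n) ℝ, IsCoreInv A C ∧
          B * C * A + A * X * A + A * C * B = B) := by
  refine ⟨⟨fun h => ?_, ?_⟩, ⟨fun h => ?_, ?_⟩, ⟨S12.of_dcgi, ?_⟩⟩
  · obtain ⟨C, X, hC, hX⟩ := S12.of_dcgi h
    obtain ⟨G, hG⟩ := S12.exists_group (S12.rank_of_core hC)
    exact ⟨G, _, hG, S12.K_indep hC.1 hG.1 (S12.K_of hC.1 hX)⟩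
  · rintro ⟨G, X, hG, hX⟩
    exact S12.dcgi_iff hP (S12.rank_of_group hG) hG.1 (S12.K_of hG.1 hX)
  · obtain ⟨C, X, hC, hX⟩ := S12.of_dcgi h
    exact ⟨S12.rank_of_core hC, _, S12.K_indep hC.1 hP.1 (S12.K_of hC.1 hX)⟩
  · rintro ⟨hr, X, hX⟩
    exact S12.dcgi_iff hP hr hP.1 (S12.K_of hP.1 hX)
  · rintro ⟨C, X, hC, hX⟩
    exact S12.dcgi_iff hP (S12.rank_of_core hC) hC.1 (S12.K_of hC.1 hX)
end

section
/- Let Â be an n×n dual matrix, let Ĝ be a dual core generalized inverse of Â, let Ĥ be a dual group generalized inverse of Â, and let X̂ be a dual Moore–Penrose generalized inverse of Â. Then Ĝ = Ĥ·Â·X̂. -/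
open Matrix

theorem stmt13 {n : ℕ} (M G H X : Matrix (Fin n) (Fin n) (DualNumber ℝ))
    (hG : IsDCGI M G) (hH : IsDGGI M H) (hX : IsDMPGI M X) :
    G = H * M * X := by
  obtain ⟨g1, g2, g3⟩ := hG
  obtain ⟨h1, h2, h3⟩ := hH
  obtain ⟨x1, x2, x3, x4⟩ := hX
  have e1 : (M * X) * (M * G) = M * G := by rw [← mul_assoc, x1]
  have e2 : (M * G) * (M * X) = M * X := by rw [← mul_assoc, g1]
  have e3 : M * G = M * X := by
    have h := congrArg Matrix.transpose e1
    rw [Matrix.transpose_mul, g3, x3, e2] at h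
    exact h.symm
  have e4 : H * M * M = M := by rw [← h3, h1]
  calc G = M * (G * G) := g2.symm
    _ = H * M * M * (G * G) := by rw [e4]
    _ = H * M * (M * (G * G)) := by rw [mul_assoc (H * M)]
    _ = H * (M * G) := by rw [g2, mul_assoc]
    _ = H * M * X := by rw [e3, mul_assoc]
end

section
/- Let Â = A + εB be an n×n dual matrix possessing a dual core generalized inverse Ĝ = G + εR. Let P be the Moore–Penrose inverse of A, let H be a group inverse of A, and let C be a core inverse of A. Then G = C and R = −C·B·P + H·B·P − H·B·C + C·(B·P)^T·(Iₙ − A·P) + (Iₙ − A·H)·B·H·C. -/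
open Matrix

theorem dm_tr_aux {n : ℕ} (A B : Matrix (Fin n) (Fin n) ℝ) : (dm A B)ᵀ = dm Aᵀ Bᵀ := rfl

/-- core inverse basics -/
theorem core_aux {n : ℕ} {A P H C : Matrix (Fin n) (Fin n) ℝ}
    (hP : IsMoorePenrose A P) (hH : IsGroupInv A H) (hC : IsCoreInv A C) :
    A * C = A * P ∧ C = H * (A * P) := by
  obtain ⟨p1, p2, p3, p4⟩ := hP
  obtain ⟨h1, h2, h3⟩ := hH
  obtain ⟨c1, c2, c3⟩ := hC
  have e1 : A * C = A * P := by
    have : (A * P) * (A * C) = A * C := by rw [← mul_assoc, p1]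
    have h := congrArg Matrix.transpose this
    rw [Matrix.transpose_mul, p3, c3, ← mul_assoc, c1] at h
    exact h.symm
  refine ⟨e1, ?_⟩
  calc C = A * (C * C) := c2.symm
    _ = A * H * A * (C * C) := by rw [h1]
    _ = H * A * (A * (C * C)) := by rw [h3]; simp only [mul_assoc]
    _ = H * (A * P) := by rw [c2, mul_assoc, e1]

theorem stmt14 {n : ℕ} (A B G R P H C : Matrix (Fin n) (Fin n) ℝ)
    (hDCGI : IsDCGI (dm A B) (dm G R))
    (hP : IsMoorePenrose A P) (hH : IsGroupInv A H) (hC : IsCoreInv A C) :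
    G = C ∧
      R = -(C * B * P) + H * B * P - H * B * C
            + C * (B * P)ᵀ * (1 - A * P) + (1 - A * H) * B * (H * C) := by
  obtain ⟨d1, d2, d3⟩ := hDCGI
  simp only [dm_mul_aux, dm_tr_aux] at d1 d2 d3
  obtain ⟨g1, r1⟩ := dm_inj_aux d1
  obtain ⟨g2, r2⟩ := dm_inj_aux d2
  obtain ⟨g3, r3⟩ := dm_inj_aux d3
  have hGC : G = C := by
    rw [(core_aux hP hH ⟨g1, g2, g3⟩).2, (core_aux hP hH hC).2]
  refine ⟨hGC, ?_⟩
  subst hGC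
  obtain ⟨e1, e2⟩ := core_aux hP hH hC
  obtain ⟨p1, p2, p3, p4⟩ := hP
  obtain ⟨h1, h2, h3⟩ := hH
  clear hC d1 d2 d3
  rename' G => C
  rw [← e1] at e2 p3 ⊢
  obtain ⟨E, hE⟩ : ∃ E, E = A * C := ⟨_, rfl⟩
  obtain ⟨F, hF⟩ : ∃ F, F = H * A := ⟨_, rfl⟩
  rw [h3, ← hF, ← hE]
  rw [← hE] at e2 p3 g1 r1
  -- basic relations
  have EA : E * A = A := g1
  have FH : F * H = H := by rw [hF, h2]
  have AF : A * F = A := by rw [hF, ← mul_assoc, h1]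
  have FA : F * A = A := by rw [hF, ← h3, h1]
  have EE : E * E = E := by nth_rw 2 [hE]; rw [← mul_assoc, EA, hE]
  have CE : C * E = C := by rw [e2, mul_assoc, EE]
  have FE : F * E = E := by rw [hE, ← mul_assoc, FA]
  have HE : H * E = C := e2.symm
  have EH : E * H = H := by
    have : H = A * (H * H) := by rw [← mul_assoc, h3, h2]
    rw [this, ← mul_assoc, EA]
  have CA : C * A = F := by rw [e2, mul_assoc, EA, hF]
  have FC : F * C = C := by rw [e2, ← mul_assoc, FH]
  have EC : E * C = C := by rw [e2, ← mul_assoc, EH]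
  have FP : F * P = C := by rw [← CA, mul_assoc, ← e1, ← hE, CE]
  have HC : H * C = C * C := by nth_rw 2 [e2]; rw [mul_assoc, EC]
  -- first-order relations
  have s1 : E * B + A * R * A + B * F = B := by
    refine Eq.trans ?_ r1; rw [← CA]; noncomm_ring
  have s2 : E * R + A * R * C + B * (C * C) = R := by
    refine Eq.trans ?_ r2; rw [hE]; noncomm_ring
  have EAR : E * (A * R) = A * R := by rw [← mul_assoc, EA]
  have t1 : A * R * A = -(E * B * F) := by
    have h := congrArg (E * ·) s1
    simp only [mul_add, ← mul_assoc, EE, EA] at h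
    have : E * B + (A * R * A + E * B * F) = E * B + 0 := by rw [← add_assoc, h, add_zero]
    exact eq_neg_of_add_eq_zero_left (add_left_cancel this)
  have t2 : (1 - E) * B * F = (1 - E) * B := by
    have : (1 - E) * B = (B - E * B) := by noncomm_ring
    rw [this, sub_mul]
    have h := s1
    rw [t1] at h
    have h' : B - E * B = B * F - E * B * F := by
      nth_rw 1 [← h]; abel
    exact h'.symm
  have t3 : (1 - E) * R = (1 - E) * B * (C * C) := by
    have h := congrArg ((1 - E) * ·) s2
    have z : (1 - E) * E = 0 := by rw [sub_mul, EE, one_mul, sub_self]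
    have z' : (1 - E) * A = 0 := by rw [sub_mul, EA, one_mul, sub_self]
    simp only [mul_add, ← mul_assoc, z, z', zero_mul, zero_add] at h
    rw [← h]; simp only [mul_assoc]
  have t4 : A * R * E = -(E * B * C) := by
    rw [hE, ← mul_assoc, t1, ← hE, neg_mul, mul_assoc _ F, FC]
  have t5 : A * R * (1 - E) = (B * C)ᵀ * (1 - E) := by
    have z : C * (1 - E) = 0 := by rw [mul_sub, CE, mul_one, sub_self]
    have z' : (1 - E) * A = 0 := by rw [sub_mul, EA, one_mul, sub_self]
    have tE : (1 - E)ᵀ = 1 - E := by rw [transpose_sub, p3, transpose_one]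
    have a1 : (A * R + B * C) * (1 - E) = A * R * (1 - E) := by
      rw [add_mul, mul_assoc B, z, mul_zero, add_zero]
    have a2 : (1 - E) * (A * R + B * C) = (1 - E) * (B * C) := by
      rw [mul_add, ← mul_assoc _ A, z', zero_mul, zero_add]
    have := congrArg Matrix.transpose a2
    rw [transpose_mul, transpose_mul, tE, r3, a1] at this
    exact this
  have t6 : F * R = -(C * B * C) + H * (B * C)ᵀ * (1 - E) := by
    have : A * R = A * R * E + A * R * (1 - E) := by noncomm_ring
    rw [hF, mul_assoc, this, t4, t5, mul_add, mul_neg]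
    simp only [← mul_assoc, HE]
  have t7 : (1 - F) * R = (1 - F) * B * (C * C) := by
    have z : (1 - F) * (1 - E) = 1 - F := by
      rw [mul_sub, sub_mul _ _ E, FE]; simp
    calc (1 - F) * R = (1 - F) * ((1 - E) * R) := by rw [← mul_assoc, z]
      _ = _ := by rw [t3, mul_assoc (1 - E), ← mul_assoc (1 - F) (1 - E), z, mul_assoc (1 - F)]
  have t8 : (1 - E) * B * P = (1 - E) * B * C := by
    rw [← t2, mul_assoc _ F, FP, mul_assoc _ F, FC]
  have t9 : H * B * P - C * B * P = H * B * C - C * B * C := by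
    have := congrArg (H * ·) t8
    simp only [← mul_assoc, mul_sub, HE, mul_one, sub_mul] at this
    exact this
  have tE : (1 - E)ᵀ = 1 - E := by rw [transpose_sub, p3, transpose_one]
  have t10 : (B * P)ᵀ * (1 - E) = (B * C)ᵀ * (1 - E) := by
    have := congrArg Matrix.transpose t8
    rwa [mul_assoc, mul_assoc, transpose_mul, transpose_mul (1 - E), tE] at this
  have t11 : H * (B * C)ᵀ = C * (B * C)ᵀ := by
    have : (B * C)ᵀ = E * (B * C)ᵀ := by
      conv_lhs => rw [← CE, ← mul_assoc, transpose_mul, p3]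
    rw [this, ← mul_assoc, ← mul_assoc, HE, CE]
  have : R = F * R + (1 - F) * R := by noncomm_ring
  rw [this, t6, t7, HC, mul_assoc C (B * P)ᵀ, t10, t11, ← mul_assoc C (B * C)ᵀ]
  have t12 : -(C * B * P) + H * B * P - H * B * C = -(C * B * C) := by
    rw [neg_add_eq_sub, t9]; abel
  rw [t12]
end

section
/- Let Â = A + εB be a symmetric n×n dual matrix (A^T = A and B^T = B) whose dual index is one. If Ĥ is a dual group generalized inverse of Â, X̂ is a dual Moore–Penrose generalized inverse of Â, and Ĝ is a dual core generalized inverse of Â, then Ĥ = X̂ = Ĝ. -/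
open Matrix

theorem stmt19 {n : ℕ} (A B : Matrix (Fin n) (Fin n) ℝ)
    (hA : Aᵀ = A) (hB : Bᵀ = B)
    (hidx : DualIndexOne (dm A B))
    (H X G : Matrix (Fin n) (Fin n) (DualNumber ℝ))
    (hH : IsDGGI (dm A B) H) (hX : IsDMPGI (dm A B) X) (hG : IsDCGI (dm A B) G) :
    H = X ∧ X = G := by
  have hM : (dm A B)ᵀ = dm A B := by
    ext1 i j
    have h1 : A j i = A i j := congrFun (congrFun hA i) j
    have h2 : B j i = B i j := congrFun (congrFun hB i) j
    simp only [Matrix.transpose_apply, dm, h1, h2]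
  generalize dm A B = M at *
  obtain ⟨h1, h2, h3⟩ := hH
  obtain ⟨x1, x2, x3, x4⟩ := hX
  obtain ⟨g1, g2, g3⟩ := hG
  have k1 : M * Hᵀ * M = M := by
    have := congrArg Matrix.transpose h1
    simpa [Matrix.transpose_mul, hM, Matrix.mul_assoc] using this
  have k3 : Hᵀ * M = M * Hᵀ := by
    have := congrArg Matrix.transpose h3
    simpa [Matrix.transpose_mul, hM] using this
  -- the projection `M * H` is symmetric
  have e : M * H = M * Hᵀ := by
    calc M * H = (M * Hᵀ * M) * H := by rw [k1]
      _ = Hᵀ * (M * (M * H)) := by rw [← k3]; simp only [Matrix.mul_assoc]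
      _ = Hᵀ * (M * H * M) := by rw [Matrix.mul_assoc M H M, ← h3]
      _ = M * Hᵀ := by rw [h1, k3]
  have hs : (M * H)ᵀ = M * H := by
    rw [Matrix.transpose_mul, hM, k3, e]
  have a1 : M * X = M * H := by
    have : (M * H * (M * X))ᵀ = (M * X)ᵀ := by rw [← Matrix.mul_assoc, h1]
    rw [Matrix.transpose_mul, hs, x3, ← Matrix.mul_assoc, x1] at this
    exact this.symm
  have a2 : X * M = H * M := by
    have : (X * M * (H * M))ᵀ = (X * M)ᵀ := by
      rw [Matrix.mul_assoc, ← Matrix.mul_assoc M, h1]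
    rw [Matrix.transpose_mul, ← h3, hs, x4, h3, Matrix.mul_assoc, ← Matrix.mul_assoc M, x1] at this
    exact this.symm
  have a3 : M * G = M * H := by
    have : (M * H * (M * G))ᵀ = (M * G)ᵀ := by rw [← Matrix.mul_assoc, h1]
    rw [Matrix.transpose_mul, hs, g3, ← Matrix.mul_assoc, g1] at this
    exact this.symm
  have hx : X = H := by
    rw [← x2, a2, Matrix.mul_assoc, a1, ← Matrix.mul_assoc, h2]
  have hg : G = H := by
    calc G = M * (G * G) := g2.symm
      _ = (M * H * M) * (G * G) := by rw [h1]
      _ = H * M * (M * (G * G)) := by rw [h3]; simp only [Matrix.mul_assoc]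
      _ = H * (M * G) := by rw [g2, Matrix.mul_assoc]
      _ = H := by rw [a3, ← Matrix.mul_assoc, h2]
  exact ⟨hx.symm, hx.trans hg.symm⟩
end
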